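/- arXiv:0711.4040 — 4 statements merged into one kernel-verified Lean document; each statement's English description precedes it below -/
import Mathlib

section
/- Let M be a structure with a rank function satisfying Axiom 1.1, let S be a definable set of finite degree d, and let R be a definable binary relation on S. Then generic indistinguishability for R on S has at most 2^d equivalence classes. -/
/-!
Fix a partition of `S` into `d` definable pieces `P i` of full rank. By maximality of `d`, no
definable set `D` can cut a piece `P i` into two parts `P i ∩ D`, `P i \ D` both of full rank
(`not_splits`), since this would give a partition into `d + 1` pieces. For `x ∈ S` put
`D x = {y ∈ S | R x y}` (definable, by `definable_section`) and let the signature of `x` be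
the set of `i` such that `P i ∩ D x` has full rank. If `x` and `y` have the same signature, then on
each `P i` either both `D x` and `D y` or both their complements have rank less than `rk S`, so
`D x` and `D y` differ on `P i` by a set of smaller rank; by Axiom 1.1 they differ on `S` by a set
of smaller rank, i.e. `x ~ y`. There are at most `2 ^ d` signatures.
-/

open FirstOrder FirstOrder.Language Set Cardinal

universe u v w

namespace BP

variable {L : FirstOrder.Language.{u, v}} {M : Type w} [L.Structure M]

/-- A rank function on a structure `M`: it assigns to every subset of a finite Cartesian
power of `M` a value in `WithBot ℕ`, where by convention the empty set gets `⊥ = -∞`,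
and every nonempty parametrically definable set gets a natural number value. -/
structure RankFunction (L : FirstOrder.Language.{u, v}) (M : Type w) [L.Structure M] where
  rk : ∀ {n : ℕ}, Set (Fin n → M) → WithBot ℕ
  rk_empty : ∀ n : ℕ, rk (∅ : Set (Fin n → M)) = ⊥
  rk_ne_bot : ∀ {n : ℕ} (A : Set (Fin n → M)),
    Set.Definable (Set.univ : Set M) L A → A.Nonempty → rk A ≠ ⊥

/-- The member `S_b = φ[M, b]` of the uniformly definable family given by the
parameter-free formula `φ(x, y)`, at the parameter tuple `b`. -/
def fiber {n m : ℕ} (φ : L.Formula (Fin n ⊕ Fin m)) (b : Fin m → M) : Set (Fin n → M) :=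
  {x | φ.Realize (Sum.elim x b)}

namespace RankFunction

/-- Axiom 1.1 (weak monotonicity): `rk (A ∪ B) = max (rk A) (rk B)`. -/
def Axiom1_1 (r : RankFunction L M) : Prop :=
  ∀ {n : ℕ} (A B : Set (Fin n → M)),
    Set.Definable (Set.univ : Set M) L A → Set.Definable (Set.univ : Set M) L B →
      r.rk (A ∪ B) = max (r.rk A) (r.rk B)

/-- Axiom 1.2 (finite degree): if `A` contains infinitely many pairwise disjoint nonempty
definable subsets each of rank at least `n`, then `rk A ≥ n + 1`. -/
def Axiom1_2 (r : RankFunction L M) : Prop :=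
  ∀ {k : ℕ} (A : Set (Fin k → M)), Set.Definable (Set.univ : Set M) L A →
    ∀ n : ℕ,
      (∃ P : ℕ → Set (Fin k → M),
          (∀ i, Set.Definable (Set.univ : Set M) L (P i)) ∧ (∀ i, (P i).Nonempty) ∧
          (∀ i, P i ⊆ A) ∧ (Pairwise fun i j => Disjoint (P i) (P j)) ∧
          ∀ i, (n : WithBot ℕ) ≤ r.rk (P i)) →
        ((n + 1 : ℕ) : WithBot ℕ) ≤ r.rk A

/-- Axiom 1 (monotonicity of rank): `rk A ≥ n + 1` iff `A` contains infinitely many pairwise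
disjoint nonempty definable subsets each of rank at least `n`. -/
def Axiom1 (r : RankFunction L M) : Prop :=
  ∀ {k : ℕ} (A : Set (Fin k → M)), Set.Definable (Set.univ : Set M) L A →
    ∀ n : ℕ,
      (((n + 1 : ℕ) : WithBot ℕ) ≤ r.rk A ↔
        ∃ P : ℕ → Set (Fin k → M),
          (∀ i, Set.Definable (Set.univ : Set M) L (P i)) ∧ (∀ i, (P i).Nonempty) ∧
          (∀ i, P i ⊆ A) ∧ (Pairwise fun i j => Disjoint (P i) (P j)) ∧
          ∀ i, (n : WithBot ℕ) ≤ r.rk (P i))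

/-- Axiom 2 (definability of rank), relative to a parameter set `C`: for every uniformly
definable family `{S_b}` and every `k`, the set `{b | rk (S_b) = k}` is `C`-definable. -/
def Axiom2 (r : RankFunction L M) (C : Set M) : Prop :=
  ∀ {n m : ℕ} (φ : L.Formula (Fin n ⊕ Fin m)) (k : ℕ),
    Set.Definable C L {b : Fin m → M | r.rk (fiber φ b) = (k : WithBot ℕ)}

/-- Axiom 3 (additivity of rank): if `f` is a definable function from `A` onto `B` all of whose
fibers have rank `n`, then `rk A = rk B + n`. -/
def Axiom3 (r : RankFunction L M) : Prop :=
  ∀ {k l : ℕ} (A : Set (Fin k → M)) (B : Set (Fin l → M))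
    (f : (Fin k → M) → (Fin l → M)),
    Set.Definable (Set.univ : Set M) L A → Set.Definable (Set.univ : Set M) L B →
    Set.Definable (Set.univ : Set M) L
      {z : (Fin k ⊕ Fin l) → M | z ∘ Sum.inl ∈ A ∧ f (z ∘ Sum.inl) = z ∘ Sum.inr} →
    Set.MapsTo f A B → Set.SurjOn f A B →
    ∀ n : ℕ, (∀ b ∈ B, r.rk (A ∩ f ⁻¹' {b}) = (n : WithBot ℕ)) →
      r.rk A = r.rk B + (n : WithBot ℕ)

/-- Axiom 4 (elimination of infinite quantifiers): for every uniformly definable family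
`{S_b}` there is an integer `m₀` such that every `S_b` with at least `m₀` elements is
infinite (i.e. every finite `S_b` has fewer than `m₀` elements). -/
def Axiom4 (r : RankFunction L M) : Prop :=
  ∀ {n m : ℕ} (φ : L.Formula (Fin n ⊕ Fin m)), ∃ m₀ : ℕ,
    ∀ (b : Fin m → M) (h : (fiber φ b).Finite), h.toFinset.card < m₀

/-- `A` can be partitioned into `d` pairwise disjoint nonempty definable subsets, each of
the same rank as `A`. -/
def IsRankPartition (r : RankFunction L M) {k : ℕ} (A : Set (Fin k → M)) (d : ℕ) : Prop :=
  ∃ P : Fin d → Set (Fin k → M),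
    (∀ i, Set.Definable (Set.univ : Set M) L (P i)) ∧ (∀ i, (P i).Nonempty) ∧
    (∀ i, r.rk (P i) = r.rk A) ∧ (Pairwise fun i j => Disjoint (P i) (P j)) ∧
    (⋃ i, P i) = A

/-- `A` has degree `d`: it can be partitioned into `d` pairwise disjoint nonempty definable
pieces of full rank, but not into more. -/
def HasDegree (r : RankFunction L M) {k : ℕ} (A : Set (Fin k → M)) (d : ℕ) : Prop :=
  r.IsRankPartition A d ∧ ∀ d' : ℕ, r.IsRankPartition A d' → d' ≤ d

/-- `A` has finite degree. -/
def HasFiniteDegree (r : RankFunction L M) {k : ℕ} (A : Set (Fin k → M)) : Prop :=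
  ∃ d : ℕ, r.HasDegree A d

/-- The degree approximation property over `C`: in any uniformly definable family indexed by a
nonempty `C`-definable set, some member has finite degree. -/
def DegreeApprox (r : RankFunction L M) (C : Set M) : Prop :=
  ∀ {n m : ℕ} (A : Set (Fin m → M)), Set.Definable C L A → A.Nonempty →
    ∀ φ : L.Formula (Fin n ⊕ Fin m), ∃ a₀ ∈ A, r.HasFiniteDegree (fiber φ a₀)

/-- The splitting approximation property over `C`: in any uniformly definable family of
infinite sets indexed by a nonempty `C`-definable set, some member `S_b` contains a definable
subset of rank `rk (S_b) - 1`. -/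
def SplittingApprox (r : RankFunction L M) (C : Set M) : Prop :=
  ∀ {n m : ℕ} (B : Set (Fin m → M)), Set.Definable C L B → B.Nonempty →
    ∀ φ : L.Formula (Fin n ⊕ Fin m), (∀ b ∈ B, (fiber φ b).Infinite) →
      ∃ b ∈ B, ∃ S' : Set (Fin n → M), Set.Definable (Set.univ : Set M) L S' ∧
        S' ⊆ fiber φ b ∧ r.rk S' + 1 = r.rk (fiber φ b)

/-- A `BP'`-rank (relative to `C`): Axioms 1.1, 1.2, 2 (over `C`), and 4. -/
def IsBP'Rank (r : RankFunction L M) (C : Set M) : Prop :=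
  r.Axiom1_1 ∧ r.Axiom1_2 ∧ r.Axiom2 C ∧ r.Axiom4

/-- A `BP₀'`-rank relative to `C`: Axiom 1.1, the degree approximation property over `C`,
Axiom 2 over `C`, and Axiom 4. -/
def IsBP0'Rank (r : RankFunction L M) (C : Set M) : Prop :=
  r.Axiom1_1 ∧ r.DegreeApprox C ∧ r.Axiom2 C ∧ r.Axiom4

/-- A `BP`-rank: Axioms 1, 2, 3, and 4. -/
def IsBPRank (r : RankFunction L M) : Prop :=
  r.Axiom1 ∧ r.Axiom2 Set.univ ∧ r.Axiom3 ∧ r.Axiom4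

/-- A `BP₀`-rank relative to `C`: Axiom 1.1, degree approximation and splitting approximation
over `C`, Axiom 2 over `C`, Axiom 3, and Axiom 4. -/
def IsBP0Rank (r : RankFunction L M) (C : Set M) : Prop :=
  r.Axiom1_1 ∧ r.DegreeApprox C ∧ r.SplittingApprox C ∧ r.Axiom2 C ∧ r.Axiom3 ∧ r.Axiom4

/-- Generic indistinguishability: `x₁ ~ x₂` for `R` on `S` iff the set of `x ∈ S` where
`R x₁ x` and `R x₂ x` disagree has rank strictly less than the rank of `S`. -/
def GenIndist (r : RankFunction L M) {k : ℕ} (S : Set (Fin k → M))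
    (R : (Fin k → M) → (Fin k → M) → Prop) (x₁ x₂ : Fin k → M) : Prop :=
  r.rk {x | x ∈ S ∧ ¬(R x₁ x ↔ R x₂ x)} < r.rk S

/-- `A ≡ B`: the rank of the symmetric difference of `A` and `B` is strictly less than the
rank of their union. -/
def RkEquiv (r : RankFunction L M) {k : ℕ} (A B : Set (Fin k → M)) : Prop :=
  r.rk (symmDiff A B) < r.rk (A ∪ B)

end RankFunction

open RankFunction

/-- The canonical extension relation: `S ⊆ N^k` gets rank `n` if `S` is a member, at a
parameter `b*` in the canonical extension of the index set, of a uniformly definable family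
indexed by an `M`-definable set on whose `M`-points the rank is constantly `n`. -/
def CanonExtRank {N : Type w} [L.Structure N] (r : RankFunction L M) (_f : M ↪ₑ[L] N)
    {k : ℕ} (S : Set (Fin k → N)) (n : WithBot ℕ) : Prop :=
  ∃ (m l : ℕ) (φ : L.Formula (Fin k ⊕ Fin m)) (ψ : L.Formula (Fin m ⊕ Fin l))
    (c : Fin l → M),
    (∀ b : Fin m → M, ψ.Realize (Sum.elim b c) → r.rk (fiber φ b) = n) ∧
    ∃ b' : Fin m → N, ψ.Realize (Sum.elim b' (_f ∘ c)) ∧ S = fiber φ b'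

/-- `r'` is the canonical extension of `r` along the elementary embedding `f`. -/
def IsCanonExt {N : Type w} [L.Structure N] (r : RankFunction L M) (f : M ↪ₑ[L] N)
    (r' : RankFunction L N) : Prop :=
  ∀ {k : ℕ} (S : Set (Fin k → N)) (n : WithBot ℕ), CanonExtRank r f S n → r'.rk S = n

/-- A theory has the order property if some formula `φ(x̄; ȳ)` linearly orders pairs of
sequences of tuples in some model. -/
def HasOrderProperty (L : FirstOrder.Language.{0, 0}) (T : L.Theory) : Prop :=
  ∃ (n m : ℕ) (φ : L.Formula (Fin n ⊕ Fin m)) (N : Theory.ModelType.{0, 0, 0} T)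
    (a : ℕ → Fin n → N) (b : ℕ → Fin m → N),
    ∀ i j : ℕ, (φ.Realize (Sum.elim (a i) (b j)) ↔ i < j)

/-- A theory is stable if no formula has the order property. -/
def IsStableTheory (L : FirstOrder.Language.{0, 0}) (T : L.Theory) : Prop :=
  ¬ HasOrderProperty L T

/-- A theory is superstable if it is stable in every cardinal `κ ≥ 2 ^ ℵ₀`: over every
parameter set of size at most `κ` in a model, there are at most `κ` complete 1-types. -/
def IsSuperstableTheory (L : FirstOrder.Language.{0, 0}) (T : L.Theory) : Prop :=
  ∀ κ : Cardinal.{0}, 2 ^ Cardinal.aleph0 ≤ κ →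
    ∀ (N : Theory.ModelType.{0, 0, 0} T) (A : Set N), #A ≤ κ →
      #(((L[[A]]).completeTheory N).CompleteType (Fin 1)) ≤ κ

theorem rk_mono (r : RankFunction L M) (h11 : r.Axiom1_1) {k : ℕ} {A B : Set (Fin k → M)}
    (hA : Set.Definable (Set.univ : Set M) L A) (hB : Set.Definable (Set.univ : Set M) L B)
    (h : A ⊆ B) : r.rk A ≤ r.rk B := by
  have := h11 A B hA hB
  rw [Set.union_eq_self_of_subset_left h] at this
  rw [this]
  exact le_max_left _ _

theorem rk_biUnion_lt (r : RankFunction L M) (h11 : r.Axiom1_1) {k : ℕ} {ι : Type*}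
    (A : ι → Set (Fin k → M)) (hA : ∀ i, Set.Definable (Set.univ : Set M) L (A i))
    (c : WithBot ℕ) (hc : ⊥ < c) (h : ∀ i, r.rk (A i) < c) (s : Finset ι) :
    r.rk (⋃ i ∈ s, A i) < c := by
  classical
  induction s using Finset.induction_on with
  | empty => simpa [r.rk_empty] using hc
  | insert a s _ ih =>
    rw [Finset.set_biUnion_insert, h11 _ _ (hA a) (Set.definable_biUnion_finset hA s)]
    exact max_lt (h a) ih

/-- A section of a definable set at a point is definable: substitute the coordinates of
the point, as parameters, for the first block of variables. -/
theorem definable_section {k : ℕ} (Z : Set ((Fin k ⊕ Fin k) → M))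
    (hZ : Set.Definable (Set.univ : Set M) L Z) (x : Fin k → M) :
    Set.Definable (Set.univ : Set M) L {y : Fin k → M | Sum.elim x y ∈ Z} := by
  obtain ⟨φ, rfl⟩ := hZ
  refine ⟨φ.subst (Sum.elim (fun i => (L.con (⟨x i, trivial⟩ : (Set.univ : Set M))).term)
    (fun j => Term.var j)), ?_⟩
  ext y
  simp only [Set.mem_ofPred_eq, Formula.Realize, BoundedFormula.realize_subst]
  have : (Sum.elim x y : Fin k ⊕ Fin k → M) = fun a => Term.realize y
      ((Sum.elim (fun i => (L.con (⟨x i, trivial⟩ : (Set.univ : Set M))).term)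
        (fun j => Term.var j) : Fin k ⊕ Fin k → L[[(Set.univ : Set M)]].Term (Fin k)) a) := by
    funext a
    rcases a with i | j <;> simp
  rw [this]

/-- A piece of a partition into the maximal number of full-rank pieces cannot be cut by a
definable set into two parts of full rank. -/
theorem not_splits (r : RankFunction L M) {k d : ℕ} {S : Set (Fin k → M)}
    (hmax : ∀ d' : ℕ, r.IsRankPartition S d' → d' ≤ d) (hSbot : r.rk S ≠ ⊥)
    (P : Fin d → Set (Fin k → M))
    (hdef : ∀ i, Set.Definable (Set.univ : Set M) L (P i))
    (hrk : ∀ i, r.rk (P i) = r.rk S) (hdisj : Pairwise fun i j => Disjoint (P i) (P j))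
    (hU : (⋃ i, P i) = S) (i : Fin d) {D : Set (Fin k → M)}
    (hD : Set.Definable (Set.univ : Set M) L D) (h1 : r.rk (P i ∩ D) = r.rk S)
    (h2 : r.rk (P i \ D) = r.rk S) : False := by
  classical
  have nonempty_of : ∀ A : Set (Fin k → M), r.rk A = r.rk S → A.Nonempty := by
    intro A hA
    rw [Set.nonempty_iff_ne_empty]
    rintro rfl
    exact hSbot (hA ▸ r.rk_empty k)
  let Q : Fin d → Set (Fin k → M) := Function.update P i (P i ∩ D)
  have hQi : Q i = P i ∩ D := Function.update_self ..
  have hQj : ∀ j, j ≠ i → Q j = P j := fun j hj => Function.update_of_ne hj ..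
  have hQsub : ∀ j, Q j ⊆ P j := by
    intro j
    by_cases hj : j = i
    · subst hj; rw [hQi]; exact Set.inter_subset_left
    · rw [hQj j hj]
  have hQ0 : ∀ j, Disjoint (P i \ D) (Q j) := by
    intro j
    by_cases hj : j = i
    · subst hj; rw [hQi]
      exact Set.disjoint_left.2 fun _ h h' => h.2 h'.2
    · rw [hQj j hj]
      exact (hdisj (Ne.symm hj)).mono_left Set.sdiff_subset
  have hQrk : ∀ j, r.rk (Q j) = r.rk S := by
    intro j
    by_cases hj : j = i
    · subst hj; rw [hQi, h1]
    · rw [hQj j hj, hrk]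
  have hQdef : ∀ j, Set.Definable (Set.univ : Set M) L (Q j) := by
    intro j
    by_cases hj : j = i
    · subst hj; rw [hQi]; exact (hdef _).inter hD
    · rw [hQj j hj]; exact hdef j
  have hcons_rk : ∀ j, r.rk ((Fin.cons (P i \ D) Q : Fin (d + 1) → _) j) = r.rk S := by
    intro j
    refine Fin.cases ?_ (fun j => ?_) j
    · simpa using h2
    · simpa using hQrk j
  have := hmax (d + 1) ⟨Fin.cons (P i \ D) Q, ?_, fun j => nonempty_of _ (hcons_rk j),
    hcons_rk, ?_, ?_⟩
  · omega
  · intro j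
    refine Fin.cases ?_ (fun j => ?_) j
    · simpa using (hdef i).sdiff hD
    · simpa using hQdef j
  · intro a b
    refine Fin.cases ?_ (fun a => ?_) a <;> refine Fin.cases ?_ (fun b => ?_) b
    · intro h; exact absurd rfl h
    · intro _; simpa using hQ0 b
    · intro _; simpa using (hQ0 a).symm
    · intro h
      have hab : a ≠ b := fun h' => h (by rw [h'])
      simpa using (hdisj hab).mono (hQsub a) (hQsub b)
  · rw [← hU]
    ext y
    simp only [Set.mem_iUnion, Fin.exists_fin_succ, Fin.cons_zero, Fin.cons_succ]
    constructor
    · rintro (h | ⟨j, hj⟩)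
      · exact ⟨i, h.1⟩
      · exact ⟨j, hQsub j hj⟩
    · rintro ⟨j, hj⟩
      by_cases hji : j = i
      · subst hji
        by_cases hy : y ∈ D
        · exact Or.inr ⟨j, by rw [hQi]; exact ⟨hj, hy⟩⟩
        · exact Or.inl ⟨hj, hy⟩
      · exact Or.inr ⟨j, by rw [hQj j hji]; exact hj⟩

/-- If `M` carries a rank function satisfying Axiom 1.1, `S` is a definable set
of finite degree `d`, and `R` is a definable binary relation on `S`, then generic
indistinguishability for `R` on `S` has at most `2 ^ d` equivalence classes. -/
theorem genIndist_classes_le_two_pow_degree (L : FirstOrder.Language.{u, v})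
    (M : Type w) [L.Structure M] (r : RankFunction L M) (h11 : r.Axiom1_1)
    {k : ℕ} (S : Set (Fin k → M)) (R : (Fin k → M) → (Fin k → M) → Prop)
    (hS : Set.Definable (Set.univ : Set M) L S)
    (hR : Set.Definable (Set.univ : Set M) L
      {z : (Fin k ⊕ Fin k) → M |
        z ∘ Sum.inl ∈ S ∧ z ∘ Sum.inr ∈ S ∧ R (z ∘ Sum.inl) (z ∘ Sum.inr)})
    (d : ℕ) (hd : r.HasDegree S d) :
    ∃ F : Finset (Fin k → M), ↑F ⊆ S ∧ F.card ≤ 2 ^ d ∧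
      ∀ x ∈ S, ∃ y ∈ F, r.GenIndist S R x y := by
  classical
  obtain ⟨⟨P, hdef, -, hrk, hdisj, hU⟩, hmax⟩ := hd
  rcases S.eq_empty_or_nonempty with hS0 | hSne
  · exact ⟨∅, by simp, by simp, by simp [hS0]⟩
  have hSbot : r.rk S ≠ ⊥ := r.rk_ne_bot S hS hSne
  let D : (Fin k → M) → Set (Fin k → M) := fun x => {y | x ∈ S ∧ y ∈ S ∧ R x y}
  have hDdef : ∀ x, Set.Definable (Set.univ : Set M) L (D x) := fun x =>
    definable_section _ hR x
  let σ : (Fin k → M) → Finset (Fin d) := fun x =>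
    Finset.univ.filter fun i => r.rk (P i ∩ D x) = r.rk S
  have hlt : ∀ i A, Set.Definable (Set.univ : Set M) L A → A ⊆ P i → r.rk A ≠ r.rk S →
      r.rk A < r.rk S := fun i A hA hAP hAS =>
    lt_of_le_of_ne (hrk i ▸ rk_mono r h11 hA (hdef i) hAP) hAS
  have key : ∀ x ∈ S, ∀ y ∈ S, σ x = σ y → r.GenIndist S R x y := by
    intro x hx y hy hxy
    let E : Set (Fin k → M) := (D x \ D y) ∪ (D y \ D x)
    have hEdef : Set.Definable (Set.univ : Set M) L E :=
      ((hDdef x).sdiff (hDdef y)).union ((hDdef y).sdiff (hDdef x))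
    have hE : {z | z ∈ S ∧ ¬(R x z ↔ R y z)} = ⋃ i ∈ (Finset.univ : Finset (Fin d)), P i ∩ E := by
      have : (⋃ i ∈ (Finset.univ : Finset (Fin d)), P i ∩ E) = S ∩ E := by
        rw [← hU, Set.iUnion_inter]; simp
      rw [this]
      ext z
      simp only [E, D, Set.mem_inter_iff, Set.mem_union, Set.mem_sdiff, Set.mem_ofPred_eq]
      tauto
    rw [GenIndist, hE]
    refine rk_biUnion_lt r h11 _ (fun i => (hdef i).inter hEdef) _ (bot_lt_iff_ne_bot.2 hSbot)
      (fun i => ?_) _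
    have hi : r.rk (P i ∩ D x) = r.rk S ↔ r.rk (P i ∩ D y) = r.rk S := by
      have := congrArg (i ∈ ·) hxy
      simpa [σ] using this
    -- Two sets of smaller rank whose union contains `P i ∩ E` suffice.
    have cover : ∀ A B, Set.Definable (Set.univ : Set M) L A →
        Set.Definable (Set.univ : Set M) L B → r.rk A < r.rk S → r.rk B < r.rk S →
        P i ∩ E ⊆ A ∪ B → r.rk (P i ∩ E) < r.rk S := by
      intro A B hA hB hAr hBr hsub
      refine (rk_mono r h11 ((hdef i).inter hEdef) (hA.union hB) hsub).trans_lt ?_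
      rw [h11 A B hA hB]
      exact max_lt hAr hBr
    by_cases hxi : r.rk (P i ∩ D x) = r.rk S
    · refine cover (P i \ D x) (P i \ D y) ((hdef i).sdiff (hDdef x)) ((hdef i).sdiff (hDdef y))
        (hlt i _ ((hdef i).sdiff (hDdef x)) Set.sdiff_subset fun h => ?_)
        (hlt i _ ((hdef i).sdiff (hDdef y)) Set.sdiff_subset fun h => ?_) ?_
      · exact not_splits r hmax hSbot P hdef hrk hdisj hU i (hDdef x) hxi h
      · exact not_splits r hmax hSbot P hdef hrk hdisj hU i (hDdef y) (hi.1 hxi) h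
      · rintro z ⟨hz, h | h⟩
        · exact Or.inr ⟨hz, h.2⟩
        · exact Or.inl ⟨hz, h.2⟩
    · refine cover (P i ∩ D x) (P i ∩ D y) ((hdef i).inter (hDdef x)) ((hdef i).inter (hDdef y))
        (hlt i _ ((hdef i).inter (hDdef x)) Set.inter_subset_left hxi)
        (hlt i _ ((hdef i).inter (hDdef y)) Set.inter_subset_left (mt hi.2 hxi)) ?_
      rintro z ⟨hz, h | h⟩
      · exact Or.inl ⟨hz, h.1⟩
      · exact Or.inr ⟨hz, h.1⟩
  -- Choose one point of `S` for each signature; signatures not realized in `S` get a junk point.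
  obtain ⟨s₀, hs₀⟩ := hSne
  have hrep : ∀ t : Finset (Fin d), ∃ y ∈ S, ∀ x ∈ S, σ x = t → σ y = t := by
    intro t
    by_cases h : ∃ y ∈ S, σ y = t
    · obtain ⟨y, hy, hyt⟩ := h
      exact ⟨y, hy, fun _ _ _ => hyt⟩
    · exact ⟨s₀, hs₀, fun x hx hxt => absurd ⟨x, hx, hxt⟩ h⟩
  choose rep hrepS hrepσ using hrep
  refine ⟨Finset.univ.image rep, ?_, ?_, ?_⟩
  · intro y hy
    obtain ⟨t, -, rfl⟩ := Finset.mem_image.1 hy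
    exact hrepS t
  · refine Finset.card_image_le.trans ?_
    simp
  · intro x hx
    exact ⟨rep (σ x), Finset.mem_image_of_mem _ (Finset.mem_univ _),
      key x hx _ (hrepS _) (hrepσ _ x hx rfl).symm⟩

end BP
end

section
/- Let M be a structure with a rank function rk that satisfies Axiom 2 and is monotone under inclusion (A ⊆ B implies rk(A) ≤ rk(B)), and let N be an elementary extension of M. Then the canonical extension of rk assigns to every nonempty definable subset of every finite power of N a well-defined rank: every such set receives at least one value, and if a set lies in the canonical extensions of two uniformly definable families over M on each of which rk is constant, the two constant values agree. -/
/-!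
Existence. By definability a nonempty definable `S ⊆ N^k` is a fiber `φ[N, b']` of a
parameter-free family. Over `M` the ranks of the fibers of `φ` are bounded by the rank of the full
power `M^k`, by monotonicity, so Axiom 2 splits the parameter space `M^m` into finitely many
`M`-definable pieces of constant rank: the sets `rk = j` for `j` up to the bound, and the complement
of their union, where `rk = ⊥`. The formulas cutting out these pieces also cover `N^m`, so `b'`
satisfies one of them.

Uniqueness. If `S` is a fiber `φ₁[N, b₁] = φ₂[N, b₂]` with `b₁`, `b₂` in the extensions of two
`M`-definable index sets, then "some members of the two families coincide" is a first-order
property of the parameters of the index sets (`exists_fiber_eq_fiber`). It reflects to `M`, where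
the common member has both constant ranks.

The lemma `exists_finite_params` replaces a formula with arbitrary parameters by one with a finite
parameter tuple, uniformly in the structure that interprets the parameters.
-/

open FirstOrder FirstOrder.Language Set Cardinal

universe u v w

namespace BP

variable {L : FirstOrder.Language.{u, v}} {M : Type w} [L.Structure M]

open RankFunction

/-- A formula with parameters from `A` uses only finitely many of them: it is equivalent to a
parameter-free formula at a finite tuple `c` from `A`, in every structure `K` and for every
interpretation `g` of the parameters in `K`. -/
lemma exists_finite_params {L : FirstOrder.Language.{u, v}} {A : Type w} {α : Type}
    (θ : L.Formula (A ⊕ α)) :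
    ∃ (l : ℕ) (ψ : L.Formula (α ⊕ Fin l)) (c : Fin l → A),
      ∀ (K : Type w) [L.Structure K] (g : A → K) (x : α → K),
        ψ.Realize (Sum.elim x (g ∘ c)) ↔ θ.Realize (Sum.elim g x) := by
  classical
  let F : Finset A := BoundedFormula.freeVarFinset θ |>.toLeft
  refine ⟨F.card, BoundedFormula.restrictFreeVar θ
    (fun z => Sum.casesOn (motive := fun y => y ∈ BoundedFormula.freeVarFinset θ → α ⊕ Fin F.card)
      z.1 (fun a ha => Sum.inr (F.equivFin ⟨a, by simpa [F] using ha⟩))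
      (fun a _ => Sum.inl a) z.2), fun i => (F.equivFin.symm i : A), ?_⟩
  intro K _ g x
  refine BoundedFormula.realize_restrictFreeVar (Sum.elim g x) ?_
  rintro ⟨a | a, ha⟩ <;> simp

lemma definable_fiber {L : FirstOrder.Language.{u, v}} {M : Type w} [L.Structure M] {k m : ℕ}
    (φ : L.Formula (Fin k ⊕ Fin m)) (b : Fin m → M) :
    Set.Definable (Set.univ : Set M) L (fiber φ b) := by
  rw [Set.definable_iff_exists_formula_sum]
  refine ⟨φ.relabel (Sum.elim Sum.inr (fun i => Sum.inl ⟨b i, Set.mem_univ _⟩)), ?_⟩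
  ext x
  simp only [fiber, Set.mem_ofPred_eq, Formula.realize_relabel]
  apply iff_of_eq
  congr 1
  funext z
  rcases z with z | z <;> rfl

lemma exists_eq_fiber {L : FirstOrder.Language.{u, v}} {N : Type w} [L.Structure N] {k : ℕ}
    {S : Set (Fin k → N)} (hS : Set.Definable (Set.univ : Set N) L S) :
    ∃ (m : ℕ) (φ : L.Formula (Fin k ⊕ Fin m)) (b : Fin m → N), S = fiber φ b := by
  obtain ⟨θ, rfl⟩ := Set.definable_iff_exists_formula_sum.1 hS
  obtain ⟨m, φ, c, h⟩ := exists_finite_params θ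
  refine ⟨m, φ, fun i => (c i : N), ?_⟩
  ext x
  exact (h N (fun a => (a : N)) x).symm

/-- If the extensions to `N` of two uniformly definable families over `M` share a member, so do the
families themselves: this is a first-order property of the parameters of the index sets. -/
lemma exists_fiber_eq_fiber {L : FirstOrder.Language.{u, v}} {M N : Type w} [L.Structure M]
    [L.Structure N] (f : M ↪ₑ[L] N) {k m₁ m₂ l₁ l₂ : ℕ}
    (φ₁ : L.Formula (Fin k ⊕ Fin m₁)) (φ₂ : L.Formula (Fin k ⊕ Fin m₂))
    (ψ₁ : L.Formula (Fin m₁ ⊕ Fin l₁)) (ψ₂ : L.Formula (Fin m₂ ⊕ Fin l₂))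
    (c₁ : Fin l₁ → M) (c₂ : Fin l₂ → M)
    (h : ∃ (b₁ : Fin m₁ → N) (b₂ : Fin m₂ → N), ψ₁.Realize (Sum.elim b₁ (f ∘ c₁)) ∧
      ψ₂.Realize (Sum.elim b₂ (f ∘ c₂)) ∧ fiber φ₁ b₁ = fiber φ₂ b₂) :
    ∃ (b₁ : Fin m₁ → M) (b₂ : Fin m₂ → M), ψ₁.Realize (Sum.elim b₁ c₁) ∧
      ψ₂.Realize (Sum.elim b₂ c₂) ∧ fiber φ₁ b₁ = fiber φ₂ b₂ := by
  let χ₁ : L.Formula ((Fin l₁ ⊕ Fin l₂) ⊕ (Fin m₁ ⊕ Fin m₂)) :=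
    ψ₁.relabel (Sum.elim (fun i => .inr (.inl i)) (fun i => .inl (.inl i)))
  let χ₂ : L.Formula ((Fin l₁ ⊕ Fin l₂) ⊕ (Fin m₁ ⊕ Fin m₂)) :=
    ψ₂.relabel (Sum.elim (fun i => .inr (.inr i)) (fun i => .inl (.inr i)))
  let η₁ : L.Formula (((Fin l₁ ⊕ Fin l₂) ⊕ (Fin m₁ ⊕ Fin m₂)) ⊕ Fin k) :=
    φ₁.relabel (Sum.elim (fun i => .inr i) (fun i => .inl (.inr (.inl i))))
  let η₂ : L.Formula (((Fin l₁ ⊕ Fin l₂) ⊕ (Fin m₁ ⊕ Fin m₂)) ⊕ Fin k) :=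
    φ₂.relabel (Sum.elim (fun i => .inr i) (fun i => .inl (.inr (.inr i))))
  let Θ : L.Formula (Fin l₁ ⊕ Fin l₂) :=
    (χ₁ ⊓ (χ₂ ⊓ (η₁.iff η₂).iAlls (Fin k))).iExs (Fin m₁ ⊕ Fin m₂)
  have key : ∀ (K : Type w) [L.Structure K] (d₁ : Fin l₁ → K) (d₂ : Fin l₂ → K),
      Θ.Realize (Sum.elim d₁ d₂) ↔
        ∃ (b₁ : Fin m₁ → K) (b₂ : Fin m₂ → K), ψ₁.Realize (Sum.elim b₁ d₁) ∧
          ψ₂.Realize (Sum.elim b₂ d₂) ∧ fiber φ₁ b₁ = fiber φ₂ b₂ := by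
    intro K _ d₁ d₂
    have aux : ∀ b : Fin m₁ ⊕ Fin m₂ → K,
        (χ₁ ⊓ (χ₂ ⊓ (η₁.iff η₂).iAlls (Fin k))).Realize (Sum.elim (Sum.elim d₁ d₂) b) ↔
          ψ₁.Realize (Sum.elim (b ∘ Sum.inl) d₁) ∧ ψ₂.Realize (Sum.elim (b ∘ Sum.inr) d₂) ∧
            fiber φ₁ (b ∘ Sum.inl) = fiber φ₂ (b ∘ Sum.inr) := by
      intro b
      simp only [Formula.realize_inf, Formula.realize_iAlls, Formula.realize_iff, χ₁, χ₂, η₁, η₂,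
        Formula.realize_relabel, fiber, Set.ext_iff, Set.mem_ofPred_eq]
      refine and_congr (iff_of_eq (congrArg _ ?_)) (and_congr (iff_of_eq (congrArg _ ?_))
        (forall_congr' fun x => iff_congr (iff_of_eq (congrArg _ ?_)) (iff_of_eq (congrArg _ ?_))))
      all_goals
        funext z
        rcases z with z | z <;> rfl
    simp only [Θ, Formula.realize_iExs, aux]
    constructor
    · rintro ⟨b, hb⟩
      exact ⟨_, _, hb⟩
    · rintro ⟨b₁, b₂, hb⟩
      exact ⟨Sum.elim b₁ b₂, hb⟩
  have hN := (key N (f ∘ c₁) (f ∘ c₂)).2 h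
  rw [← Sum.comp_elim, f.map_formula] at hN
  exact (key M c₁ c₂).1 hN

/-- If a formula `θ` with parameters in `M` implies `rk (S_b) = n` for tuples `b` of `M`, then every
tuple of `N` satisfying `θ` gives a set of canonical rank `n`. -/
lemma canonExtRank_of_realize {L : FirstOrder.Language.{u, v}} {M N : Type w} [L.Structure M]
    [L.Structure N] (r : RankFunction L M) (f : M ↪ₑ[L] N) {k m : ℕ}
    (φ : L.Formula (Fin k ⊕ Fin m)) (n : WithBot ℕ)
    (θ : L.Formula ((Set.univ : Set M) ⊕ Fin m))
    (hθ : ∀ b : Fin m → M, θ.Realize (Sum.elim (↑) b) → r.rk (fiber φ b) = n)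
    (b' : Fin m → N) (hb' : θ.Realize (Sum.elim (fun a => f (a : M)) b')) :
    CanonExtRank r f (fiber φ b') n := by
  obtain ⟨l, ψ, c, h⟩ := exists_finite_params θ
  refine ⟨m, l, φ, ψ, fun i => (c i : M), fun b hb => hθ b ?_, b', ?_, rfl⟩
  · exact (h M (fun a => (a : M)) b).1 hb
  · exact (h N (fun a => f (a : M)) b').2 hb'

lemma exists_canonExtRank {L : FirstOrder.Language.{u, v}} {M N : Type w} [L.Structure M]
    [L.Structure N] (r : RankFunction L M)
    (hmono : ∀ {k : ℕ} (A B : Set (Fin k → M)), Set.Definable (Set.univ : Set M) L A →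
      Set.Definable (Set.univ : Set M) L B → A ⊆ B → r.rk A ≤ r.rk B)
    (h2 : r.Axiom2 (Set.univ : Set M)) (f : M ↪ₑ[L] N) {k m : ℕ}
    (φ : L.Formula (Fin k ⊕ Fin m)) (b' : Fin m → N) :
    ∃ n : WithBot ℕ, CanonExtRank r f (fiber φ b') n := by
  have hθ := fun j : ℕ => Set.definable_iff_exists_formula_sum.1 (h2 φ j)
  choose θ hθ using hθ
  have hθ' : ∀ (j : ℕ) (b : Fin m → M),
      (θ j).Realize (Sum.elim (↑) b) ↔ r.rk (fiber φ b) = (j : WithBot ℕ) := fun j b =>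
    (Set.ext_iff.1 (hθ j) b).symm
  by_cases hex : ∃ j, (θ j).Realize (Sum.elim (fun a => f (a : M)) b')
  · obtain ⟨j, hj⟩ := hex
    exact ⟨j, canonExtRank_of_realize r f φ j (θ j) (fun b => (hθ' j b).1) b' hj⟩
  · push Not at hex
    obtain ⟨d, hd⟩ : ∃ d : ℕ, r.rk (Set.univ : Set (Fin k → M)) ≤ d := by
      cases r.rk (Set.univ : Set (Fin k → M)) with
      | bot => exact ⟨0, bot_le⟩
      | coe d => exact ⟨d, le_rfl⟩
    -- A fiber whose rank is none of `0, …, d` has rank `⊥`, since `d` bounds all ranks of fibers.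
    refine ⟨⊥, canonExtRank_of_realize r f φ ⊥
      (Formula.iInf fun j : Fin (d + 1) => (θ j).not) ?_ b' ?_⟩
    · intro b hb
      rw [Formula.realize_iInf] at hb
      have hle : r.rk (fiber φ b) ≤ d :=
        (hmono _ _ (definable_fiber φ b) Set.definable_univ (Set.subset_univ _)).trans hd
      by_contra hne
      obtain ⟨j, hj⟩ := WithBot.ne_bot_iff_exists.1 hne
      have hjd : j ≤ d := by
        rw [← hj] at hle
        exact WithBot.coe_le_coe.1 hle
      have := hb ⟨j, Nat.lt_succ_of_le hjd⟩
      rw [Formula.realize_not, hθ'] at this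
      exact this hj.symm
    · rw [Formula.realize_iInf]
      intro j
      rw [Formula.realize_not]
      exact hex j

/-- If `rk` satisfies Axiom 2 and is monotone under inclusion, and `N` is an
elementary extension of `M`, then the canonical extension of `rk` assigns to every nonempty
definable subset of every finite power of `N` a well-defined rank: at least one value is
assigned, and any two assigned values agree. -/
theorem canonExt_wellDefined (L : FirstOrder.Language.{u, v})
    (M : Type w) (N : Type w) [L.Structure M] [L.Structure N] (r : RankFunction L M)
    (hmono : ∀ {k : ℕ} (A B : Set (Fin k → M)), Set.Definable (Set.univ : Set M) L A →
      Set.Definable (Set.univ : Set M) L B → A ⊆ B → r.rk A ≤ r.rk B)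
    (h2 : r.Axiom2 (Set.univ : Set M)) (f : M ↪ₑ[L] N) :
    ∀ {k : ℕ} (S : Set (Fin k → N)), Set.Definable (Set.univ : Set N) L S → S.Nonempty →
      (∃ n : WithBot ℕ, CanonExtRank r f S n) ∧
      ∀ n₁ n₂ : WithBot ℕ, CanonExtRank r f S n₁ → CanonExtRank r f S n₂ → n₁ = n₂ := by
  intro k S hS _
  constructor
  · obtain ⟨m, φ, b', rfl⟩ := exists_eq_fiber hS
    exact exists_canonExtRank r hmono h2 f φ b'
  · rintro n₁ n₂ ⟨m₁, l₁, φ₁, ψ₁, c₁, h₁, b₁, hb₁, rfl⟩ ⟨m₂, l₂, φ₂, ψ₂, c₂, h₂, b₂, hb₂, hS₂⟩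
    obtain ⟨a₁, a₂, ha₁, ha₂, ha⟩ :=
      exists_fiber_eq_fiber f φ₁ φ₂ ψ₁ ψ₂ c₁ c₂ ⟨b₁, b₂, hb₁, hb₂, hS₂⟩
    rw [← h₁ a₁ ha₁, ← h₂ a₂ ha₂, ha]

end BP
end

section
/- Let M be a structure equipped with a rank function rk satisfying Axiom 1.1 and Axiom 2, and let N be an elementary extension of M. Then the canonical extension of rk to N satisfies Axiom 3 (additivity) if and only if rk itself satisfies Axiom 3. -/
/-!
Axiom 3 speaks about a definable surjection, and such a surjection is determined by its graph
`γ(x, y, a)`, with `γ` parameter-free and `a` a finite tuple. For fixed `γ` and fixed numbers `n`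
and `j`, additivity for this graph (`AdditiveAt`) says: if `γ` is functional, its fibers have rank
`n` and its range has rank `j`, then its domain has rank `j + n`. Axiom 3 is the conjunction of all
these instances (`axiom3_iff_additiveAt`), in `M` as well as in `N`.

Each instance is first-order over `M`, and expressed by the same formula in `M` and in `N`
(`Corr.additiveAt`), so it holds for all `a` in `M` exactly when it holds for all `a` in `N`.
The one clause for which this is not immediate is "`rk (S_b) = n`" (`Corr.rank_fiber`). Axiom 2
supplies the formula in `M`, and the definition of the canonical extension shows that this formula
implies rank `n` in `N`. For the converse, Axiom 1.1 bounds all ranks in the family by the rank of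
the ambient Cartesian power, so finitely many of the rank formulas, together with emptiness, cover
all indices in `M` and hence in `N`.
-/

open FirstOrder FirstOrder.Language Set Cardinal

universe u v w

namespace BP

variable {L : FirstOrder.Language.{u, v}} {M : Type w} [L.Structure M]

open RankFunction

/-! ### Formulas and parameters -/

/-- A formula mentions only finitely many of the variables in `P`, and the resulting finite list
of them does not depend on the structure in which the formula is evaluated. -/
theorem exists_fin_params {β : Type} {P : Type*} (φ : L.Formula (β ⊕ P)) :
    ∃ (p : ℕ) (g : Fin p → P) (φ' : L.Formula (β ⊕ Fin p)),
      ∀ (K : Type w) [L.Structure K] (v : β → K) (c : P → K),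
        φ.Realize (Sum.elim v c) ↔ φ'.Realize (Sum.elim v (c ∘ g)) := by
  classical
  let F : Finset P := φ.freeVarFinset.toRight
  refine ⟨_, fun i => (F.equivFin.symm i : P), φ.restrictFreeVar (fun x => Sum.casesOn x.1
        (fun x _ => Sum.inl x) (fun x hx => Sum.inr (F.equivFin ⟨x, by simp [F, hx]⟩)) x.2), ?_⟩
  intro K _ v c
  refine (BoundedFormula.realize_restrictFreeVar _ ?_).symm
  rintro ⟨x | x, hx⟩ <;> simp

theorem definable_of_formula {β P : Type*} (φ : L.Formula (β ⊕ P)) (a : P → M) :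
    Set.Definable (Set.univ : Set M) L {v : β → M | φ.Realize (Sum.elim v a)} := by
  rw [Set.definable_iff_exists_formula_sum]
  refine ⟨φ.relabel (Sum.elim Sum.inr fun i => Sum.inl ⟨a i, Set.mem_univ _⟩), ?_⟩
  ext v
  simp only [Set.mem_ofPred_eq, Formula.realize_relabel]
  refine iff_of_eq (congrArg _ (funext ?_))
  rintro (x | x) <;> rfl

theorem exists_formula_of_definable {β : Type*} {S : Set (β → M)}
    (h : Set.Definable (Set.univ : Set M) L S) :
    ∃ φ : L.Formula (β ⊕ M), ∀ v, v ∈ S ↔ φ.Realize (Sum.elim v id) := by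
  rw [Set.definable_iff_exists_formula_sum] at h
  obtain ⟨φ, rfl⟩ := h
  refine ⟨φ.relabel (Sum.elim (fun x => Sum.inr x.1) Sum.inl), fun v => ?_⟩
  simp only [Set.mem_ofPred_eq, Formula.realize_relabel]
  refine iff_of_eq (congrArg _ (funext ?_))
  rintro (x | x) <;> rfl

/-! ### Predicates defined by the same formula over `M` -/

/-- `Corr f P Q`: the predicates `P` on tuples of `M` and `Q` on tuples of `N` are defined by one
and the same formula with parameters from `M`, the parameters being read in `N` through `f`.
The elements of `M` serve as extra variables that name themselves. -/
def Corr {N : Type w} [L.Structure N] (f : M ↪ₑ[L] N) {ι : Type}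
    (P : (ι → M) → Prop) (Q : (ι → N) → Prop) : Prop :=
  ∃ φ : L.Formula (ι ⊕ M), (∀ v, P v ↔ φ.Realize (Sum.elim v id)) ∧
    ∀ v, Q v ↔ φ.Realize (Sum.elim v f)

namespace Corr

variable {N : Type w} [L.Structure N] {f : M ↪ₑ[L] N} {ι κ : Type}

theorem imp {P P' : (ι → M) → Prop} {Q Q' : (ι → N) → Prop}
    (h : Corr f P Q) (h' : Corr f P' Q') :
    Corr f (fun v => P v → P' v) (fun v => Q v → Q' v) := by
  obtain ⟨φ, h1, h2⟩ := h
  obtain ⟨φ', h1', h2'⟩ := h'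
  exact ⟨φ.imp φ', fun v => by simp [Formula.realize_imp, h1, h1'],
    fun v => by simp [Formula.realize_imp, h2, h2']⟩

theorem not {P : (ι → M) → Prop} {Q : (ι → N) → Prop} (h : Corr f P Q) :
    Corr f (fun v => ¬ P v) (fun v => ¬ Q v) := by
  obtain ⟨φ, h1, h2⟩ := h
  exact ⟨φ.not, fun v => by simp [Formula.realize_not, h1],
    fun v => by simp [Formula.realize_not, h2]⟩

theorem forall_finite [Finite κ] {P : κ → (ι → M) → Prop} {Q : κ → (ι → N) → Prop}
    (h : ∀ i, Corr f (P i) (Q i)) :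
    Corr f (fun v => ∀ i, P i v) (fun v => ∀ i, Q i v) := by
  choose φ h1 h2 using h
  exact ⟨Formula.iInf φ, fun v => by simp [h1], fun v => by simp [h2]⟩

theorem all [Finite κ] {P : (ι → M) → (κ → M) → Prop} {Q : (ι → N) → (κ → N) → Prop}
    (h : Corr f (fun v : ι ⊕ κ → M => P (v ∘ Sum.inl) (v ∘ Sum.inr))
      (fun v : ι ⊕ κ → N => Q (v ∘ Sum.inl) (v ∘ Sum.inr))) :
    Corr f (fun v => ∀ x, P v x) (fun v => ∀ x, Q v x) := by
  obtain ⟨φ, h1, h2⟩ := h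
  let g : (ι ⊕ κ) ⊕ M → (ι ⊕ M) ⊕ κ :=
    Sum.elim (Sum.elim (Sum.inl ∘ Sum.inl) Sum.inr) (Sum.inl ∘ Sum.inr)
  have hg : ∀ {K : Type w} (v : ι → K) (c : M → K) (x : κ → K),
      (fun a => Sum.elim (Sum.elim v c) x a) ∘ g = Sum.elim (Sum.elim v x) c := by
    intro K v c x
    funext z
    rcases z with (z | z) | z <;> rfl
  refine ⟨(φ.relabel g).iAlls κ, fun v => ?_, fun v => ?_⟩
  · simp only [Formula.realize_iAlls, Formula.realize_relabel, hg]
    exact forall_congr' fun x => by simpa using h1 (Sum.elim v x)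
  · simp only [Formula.realize_iAlls, Formula.realize_relabel, hg]
    exact forall_congr' fun x => by simpa using h2 (Sum.elim v x)

theorem ex [Finite κ] {P : (ι → M) → (κ → M) → Prop} {Q : (ι → N) → (κ → N) → Prop}
    (h : Corr f (fun v : ι ⊕ κ → M => P (v ∘ Sum.inl) (v ∘ Sum.inr))
      (fun v : ι ⊕ κ → N => Q (v ∘ Sum.inl) (v ∘ Sum.inr))) :
    Corr f (fun v => ∃ x, P v x) (fun v => ∃ x, Q v x) := by
  have := (all (P := fun v x => ¬ P v x) (Q := fun v x => ¬ Q v x) h.not).not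
  simpa only [not_forall, not_not] using this

theorem formula {δ : Type} (φ : L.Formula δ) (g : δ → ι) :
    Corr f (fun v => φ.Realize (v ∘ g)) (fun v => φ.Realize (v ∘ g)) := by
  refine ⟨φ.relabel (Sum.inl ∘ g), fun v => ?_, fun v => ?_⟩ <;>
    simp only [Formula.realize_relabel, ← Function.comp_assoc, Sum.elim_comp_inl]

theorem eq (i j : ι) : Corr f (fun v => v i = v j) (fun v => v i = v j) :=
  ⟨((Term.var (Sum.inl i)).equal (Term.var (Sum.inl j))), fun v => by simp, fun v => by simp⟩

/-- Elementarity: corresponding predicates are simultaneously valid in `M` and in `N`. -/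
theorem forall_iff [Finite ι] {P : (ι → M) → Prop} {Q : (ι → N) → Prop} (h : Corr f P Q) :
    (∀ v, P v) ↔ ∀ v, Q v := by
  obtain ⟨φ, h1, h2⟩ := h
  have := f.map_formula ((φ.relabel Sum.swap).iAlls ι) id
  simp only [Formula.realize_iAlls, Formula.realize_relabel] at this
  have hg : ∀ {K : Type w} (v : ι → K) (c : M → K),
      (fun a => Sum.elim c v a) ∘ Sum.swap = Sum.elim v c := by
    intro K v c
    funext z
    rcases z with z | z <;> rfl
  simp only [hg, Function.comp_id] at this
  simp only [h1, h2, this]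

end Corr

/-! ### Ranks in the canonical extension -/

section Rank

variable {N : Type w} [L.Structure N] {r : RankFunction L M} {f : M ↪ₑ[L] N}
  {r' : RankFunction L N}

theorem rk_le_univ (h11 : r.Axiom1_1) {k m : ℕ} (φ : L.Formula (Fin k ⊕ Fin m))
    (b : Fin m → M) : r.rk (fiber φ b) ≤ r.rk (Set.univ : Set (Fin k → M)) := by
  have := h11 (fiber φ b) Set.univ (definable_of_formula φ b) Set.definable_univ
  rw [Set.union_univ] at this
  rw [this]
  exact le_max_left _ _

/-- In a uniformly definable family, `rk (S_b) = n` is expressed over `M` and over `N` by the same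
formula. That the formula `ρ n` defining it in `M` forces rank `n` in `N` is the definition of the
canonical extension. Conversely, the ranks in `M` are bounded by the rank of the ambient power, so
"some `ρ j` with `j ≤ K` holds, or the fiber is empty" is valid in `M`, hence in `N`; a fiber of
rank `n` in `N` must therefore satisfy `ρ n`. -/
theorem Corr.rank_fiber (h11 : r.Axiom1_1) (h2 : r.Axiom2 (Set.univ : Set M))
    (hr' : IsCanonExt r f r') {k m : ℕ} (φ : L.Formula (Fin k ⊕ Fin m)) (n : ℕ) :
    Corr f (fun b : Fin m → M => r.rk (fiber φ b) = (n : WithBot ℕ))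
      (fun b : Fin m → N => r'.rk (fiber φ b) = (n : WithBot ℕ)) := by
  choose ρ hρ using fun j : ℕ => exists_formula_of_definable (h2 φ j)
  simp only [Set.mem_ofPred_eq] at hρ
  have key : ∀ (j : ℕ) (b : Fin m → N), (ρ j).Realize (Sum.elim b f) →
      r'.rk (fiber φ b) = (j : WithBot ℕ) := by
    intro j b hb
    obtain ⟨l, g, ψ, hψ⟩ := exists_fin_params.{u, v, w} (ρ j)
    refine hr' _ _ ⟨m, l, φ, ψ, g, fun c hc => ?_, b, ?_, rfl⟩
    · exact (hρ j c).2 ((hψ M c id).2 hc)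
    · exact (hψ N b f).1 hb
  refine ⟨ρ n, hρ n, fun b => ⟨fun hb => ?_, key n b⟩⟩
  replace hb : r'.rk (fiber φ b) = (n : WithBot ℕ) := hb
  obtain ⟨K, hK⟩ : ∃ K : ℕ, r.rk (Set.univ : Set (Fin k → M)) ≤ (K : WithBot ℕ) := by
    cases r.rk (Set.univ : Set (Fin k → M)) with
    | bot => exact ⟨0, bot_le⟩
    | coe K => exact ⟨K, le_rfl⟩
  have hc : Corr f
      (fun b : Fin m → M => (∀ j : Fin (K + 1), ¬ (ρ j).Realize (Sum.elim b id)) →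
        ∀ x : Fin k → M, ¬ φ.Realize (Sum.elim x b))
      (fun b : Fin m → N => (∀ j : Fin (K + 1), ¬ (ρ j).Realize (Sum.elim b f)) →
        ∀ x : Fin k → N, ¬ φ.Realize (Sum.elim x b)) := by
    refine Corr.imp (Corr.forall_finite fun j => Corr.not ⟨ρ j, fun _ => Iff.rfl, fun _ => Iff.rfl⟩)
      (Corr.all (Corr.not ?_))
    have h := Corr.formula (f := f) φ (Sum.swap : Fin k ⊕ Fin m → Fin m ⊕ Fin k)
    have hg : ∀ {T : Type w} (v : Fin m ⊕ Fin k → T),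
        v ∘ Sum.swap = Sum.elim (v ∘ Sum.inr) (v ∘ Sum.inl) := by
      intro T v
      funext z
      rcases z with z | z <;> rfl
    simpa only [hg] using h
  have hM : ∀ b : Fin m → M, (∀ j : Fin (K + 1), ¬ (ρ j).Realize (Sum.elim b id)) →
        ∀ x : Fin k → M, ¬ φ.Realize (Sum.elim x b) := by
    intro b hj x hx
    have hne := r.rk_ne_bot (fiber φ b) (definable_of_formula φ b) ⟨x, hx⟩
    obtain ⟨i, hi⟩ := WithBot.ne_bot_iff_exists.1 hne
    have hle := (rk_le_univ h11 φ b).trans hK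
    rw [← hi] at hle
    have hle' : i ≤ K := WithBot.coe_le_coe.1 hle
    exact hj ⟨i, Nat.lt_succ_of_le hle'⟩ ((hρ i b).1 hi.symm)
  have hN := hc.forall_iff.1 hM b
  by_cases hj : ∀ j : Fin (K + 1), ¬ (ρ j).Realize (Sum.elim b f)
  · have hempty : fiber φ b = ∅ := Set.eq_empty_iff_forall_notMem.2 (hN hj)
    rw [hempty, r'.rk_empty] at hb
    exact absurd hb.symm (WithBot.coe_ne_bot)
  · push Not at hj
    obtain ⟨j, hj⟩ := hj
    have h' := key j b hj
    rw [hb] at h'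
    have : n = (j : ℕ) := WithBot.coe_inj.1 h'
    rw [this]
    exact hj

/-- `Corr.rank_fiber` for families indexed by tuples of any finite shape. -/
theorem Corr.rank (h11 : r.Axiom1_1) (h2 : r.Axiom2 (Set.univ : Set M))
    (hr' : IsCanonExt r f r') {k : ℕ} {ι : Type} [Finite ι]
    {S : (ι → M) → Set (Fin k → M)} {S' : (ι → N) → Set (Fin k → N)}
    (φ : L.Formula (Fin k ⊕ ι)) (hS : ∀ v x, x ∈ S v ↔ φ.Realize (Sum.elim x v))
    (hS' : ∀ v x, x ∈ S' v ↔ φ.Realize (Sum.elim x v)) (n : ℕ) :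
    Corr f (fun v => r.rk (S v) = (n : WithBot ℕ)) (fun v => r'.rk (S' v) = (n : WithBot ℕ)) := by
  obtain ⟨m, ⟨e⟩⟩ := Finite.exists_equiv_fin ι
  obtain ⟨ψ, h1, h1'⟩ := Corr.rank_fiber h11 h2 hr' (φ.relabel (Sum.map id e)) n
  have hg : ∀ {T : Type w} (x : Fin k → T) (v : ι → T),
      Sum.elim x (v ∘ e.symm) ∘ Sum.map id e = Sum.elim x v := by
    intro T x v
    funext z
    rcases z with z | z <;> simp
  have hf : ∀ v, S v = fiber (φ.relabel (Sum.map id e)) (v ∘ e.symm) := by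
    intro v
    ext x
    rw [hS]
    simp only [fiber, Set.mem_ofPred_eq, Formula.realize_relabel, hg]
  have hf' : ∀ v, S' v = fiber (φ.relabel (Sum.map id e)) (v ∘ e.symm) := by
    intro v
    ext x
    rw [hS']
    simp only [fiber, Set.mem_ofPred_eq, Formula.realize_relabel, hg]
  have hg2 : ∀ {T : Type w} (v : ι → T) (c : M → T),
      Sum.elim v c ∘ Sum.map e.symm id = Sum.elim (v ∘ e.symm) c := by
    intro T v c
    funext z
    rcases z with z | z <;> simp
  refine ⟨ψ.relabel (Sum.map e.symm id), fun v => ?_, fun v => ?_⟩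
  · simp only [Formula.realize_relabel, hg2, hf, h1]
  · simp only [Formula.realize_relabel, hg2, hf', h1']

end Rank

/-! ### Additivity, one formula at a time -/

/-- Additivity for the set of pairs `γ(x, y, a)`: if it is the graph of a function whose fibers
over its range all have rank `n`, and its range has rank `j`, then its domain has rank `j + n`. -/
def AdditiveAt (r : RankFunction L M) {k l p : ℕ} (γ : L.Formula ((Fin k ⊕ Fin l) ⊕ Fin p))
    (n j : ℕ) (a : Fin p → M) : Prop :=
  (∀ (x : Fin k → M) (y y' : Fin l → M), γ.Realize (Sum.elim (Sum.elim x y) a) →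
    γ.Realize (Sum.elim (Sum.elim x y') a) → ∀ i, y i = y' i) →
  (∀ y : Fin l → M, (∃ x : Fin k → M, γ.Realize (Sum.elim (Sum.elim x y) a)) →
    r.rk {x : Fin k → M | γ.Realize (Sum.elim (Sum.elim x y) a)} = (n : WithBot ℕ)) →
  r.rk {y : Fin l → M | ∃ x : Fin k → M, γ.Realize (Sum.elim (Sum.elim x y) a)} =
    (j : WithBot ℕ) →
  r.rk {x : Fin k → M | ∃ y : Fin l → M, γ.Realize (Sum.elim (Sum.elim x y) a)} =
    ((j + n : ℕ) : WithBot ℕ)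

section Additive

variable {k l p : ℕ} (γ : L.Formula ((Fin k ⊕ Fin l) ⊕ Fin p))

/-- The formula `∃ y, γ(x, y, a)` defining the domain. -/
noncomputable def domFormula : L.Formula (Fin k ⊕ Fin p) :=
  (γ.relabel (Sum.elim (Sum.elim (Sum.inl ∘ Sum.inl) Sum.inr) (Sum.inl ∘ Sum.inr))).iExs (Fin l)

/-- The formula `∃ x, γ(x, y, a)` defining the range. -/
noncomputable def ranFormula : L.Formula (Fin l ⊕ Fin p) :=
  (γ.relabel (Sum.elim (Sum.elim Sum.inr (Sum.inl ∘ Sum.inl)) (Sum.inl ∘ Sum.inr))).iExs (Fin k)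

theorem realize_domFormula {K : Type w} [L.Structure K] (x : Fin k → K) (a : Fin p → K) :
    (domFormula γ).Realize (Sum.elim x a) ↔
      ∃ y : Fin l → K, γ.Realize (Sum.elim (Sum.elim x y) a) := by
  simp only [domFormula, Formula.realize_iExs, Formula.realize_relabel]
  refine exists_congr fun y => iff_of_eq (congrArg _ (funext ?_))
  rintro ((z | z) | z) <;> rfl

theorem realize_ranFormula {K : Type w} [L.Structure K] (y : Fin l → K) (a : Fin p → K) :
    (ranFormula γ).Realize (Sum.elim y a) ↔
      ∃ x : Fin k → K, γ.Realize (Sum.elim (Sum.elim x y) a) := by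
  simp only [ranFormula, Formula.realize_iExs, Formula.realize_relabel]
  refine exists_congr fun x => iff_of_eq (congrArg _ (funext ?_))
  rintro ((z | z) | z) <;> rfl

theorem Corr.graph {N : Type w} [L.Structure N] {f : M ↪ₑ[L] N} {ι : Type}
    (g₁ : Fin k → ι) (g₂ : Fin l → ι) (g₃ : Fin p → ι) :
    Corr f (fun v => γ.Realize (Sum.elim (Sum.elim (v ∘ g₁) (v ∘ g₂)) (v ∘ g₃)))
      (fun v => γ.Realize (Sum.elim (Sum.elim (v ∘ g₁) (v ∘ g₂)) (v ∘ g₃))) := by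
  simpa only [Sum.comp_elim] using Corr.formula (f := f) γ (Sum.elim (Sum.elim g₁ g₂) g₃)

theorem Corr.additiveAt {N : Type w} [L.Structure N] {r : RankFunction L M} {f : M ↪ₑ[L] N}
    {r' : RankFunction L N} (h11 : r.Axiom1_1) (h2 : r.Axiom2 (Set.univ : Set M))
    (hr' : IsCanonExt r f r') (n j : ℕ) :
    Corr f (AdditiveAt r γ n j) (AdditiveAt r' γ n j) := by
  refine Corr.imp (Corr.all <| Corr.all <| Corr.all <| Corr.imp
    (Corr.graph γ (Sum.inl ∘ Sum.inl ∘ Sum.inr) (Sum.inl ∘ Sum.inr) (Sum.inl ∘ Sum.inl ∘ Sum.inl))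
    (Corr.imp
      (Corr.graph γ (Sum.inl ∘ Sum.inl ∘ Sum.inr) Sum.inr (Sum.inl ∘ Sum.inl ∘ Sum.inl))
      (Corr.forall_finite fun i => Corr.eq (Sum.inl (Sum.inr i)) (Sum.inr i))))
    (Corr.imp (Corr.all <| Corr.imp
      (Corr.ex (Corr.graph γ Sum.inr (Sum.inl ∘ Sum.inr) (Sum.inl ∘ Sum.inl))) ?_)
    (Corr.imp ?_ ?_))
  · have hg : ∀ {T : Type w} (x : Fin k → T) (v : Fin p ⊕ Fin l → T),
        Sum.elim x v ∘ Sum.elim (Sum.elim Sum.inl (Sum.inr ∘ Sum.inr)) (Sum.inr ∘ Sum.inl) =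
          Sum.elim (Sum.elim x (v ∘ Sum.inr)) (v ∘ Sum.inl) := by
      intro T x v
      funext z
      rcases z with (z | z) | z <;> rfl
    refine Corr.rank h11 h2 hr' (γ.relabel
      (Sum.elim (Sum.elim Sum.inl (Sum.inr ∘ Sum.inr)) (Sum.inr ∘ Sum.inl))) ?_ ?_ n
    · intro v x
      simp only [Set.mem_ofPred_eq, Formula.realize_relabel, hg]
    · intro v x
      simp only [Set.mem_ofPred_eq, Formula.realize_relabel, hg]
  · exact Corr.rank h11 h2 hr' (ranFormula γ) (fun v y => (realize_ranFormula γ y v).symm)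
      (fun v y => (realize_ranFormula γ y v).symm) j
  · exact Corr.rank h11 h2 hr' (domFormula γ) (fun v y => (realize_domFormula γ y v).symm)
      (fun v y => (realize_domFormula γ y v).symm) (j + n)

end Additive

/-- A definable surjection is determined by its graph, so Axiom 3 may be checked on definable
graphs. The case of an empty range, where both ranks are `⊥`, is not covered by `AdditiveAt` and
is trivial. -/
theorem axiom3_iff_additiveAt {K : Type w} [L.Structure K] (r : RankFunction L K) :
    r.Axiom3 ↔ ∀ (k l p : ℕ) (γ : L.Formula ((Fin k ⊕ Fin l) ⊕ Fin p)) (n j : ℕ)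
      (a : Fin p → K), AdditiveAt r γ n j a := by
  classical
  constructor
  · intro h k l p γ n j a hfun hfib hj
    have hdA := definable_of_formula (domFormula γ) a
    have hdB := definable_of_formula (ranFormula γ) a
    simp only [realize_domFormula] at hdA
    simp only [realize_ranFormula] at hdB
    set A := {x : Fin k → K | ∃ y : Fin l → K, γ.Realize (Sum.elim (Sum.elim x y) a)} with hA
    set B := {y : Fin l → K | ∃ x : Fin k → K, γ.Realize (Sum.elim (Sum.elim x y) a)} with hB
    obtain ⟨y₀, -⟩ : B.Nonempty := by
      rw [Set.nonempty_iff_ne_empty]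
      intro h0
      rw [h0, r.rk_empty] at hj
      exact WithBot.coe_ne_bot hj.symm
    let F : (Fin k → K) → (Fin l → K) := fun x => if hx : x ∈ A then hx.choose else y₀
    have hF : ∀ x ∈ A, γ.Realize (Sum.elim (Sum.elim x (F x)) a) := by
      intro x hx
      simp only [F, dif_pos hx]
      exact hx.choose_spec
    have hF' : ∀ x y, γ.Realize (Sum.elim (Sum.elim x y) a) ↔ x ∈ A ∧ F x = y := by
      intro x y
      constructor
      · intro hxy
        exact ⟨⟨y, hxy⟩, funext (hfun x _ _ (hF x ⟨y, hxy⟩) hxy)⟩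
      · rintro ⟨hx, rfl⟩
        exact hF x hx
    have := h A B F hdA hdB ?_ ?_ ?_ n ?_
    · rw [this, hj]
      rfl
    · convert definable_of_formula γ a using 1
      ext z
      simp only [Set.mem_ofPred_eq, ← hF', Sum.elim_comp_inl_inr]
    · exact fun x hx => ⟨x, hF x hx⟩
    · rintro y ⟨x, hx⟩
      exact ⟨x, (hF' x y).1 hx⟩
    · intro y hy
      rw [← hfib y hy]
      congr 1
      ext x
      simp [hF']
  · intro h k l A B F _hdA hdB hdG hmap hsurj n hn
    rcases B.eq_empty_or_nonempty with h0 | hne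
    · have hA0 : A = ∅ := Set.eq_empty_of_forall_notMem fun x hx => by
        have := hmap hx
        rw [h0] at this
        exact this
      rw [h0, hA0, r.rk_empty, r.rk_empty, WithBot.bot_add]
    obtain ⟨j, hj⟩ := WithBot.ne_bot_iff_exists.1 (r.rk_ne_bot B hdB hne)
    obtain ⟨φ, hφ⟩ := exists_formula_of_definable hdG
    obtain ⟨p, g, γ, hγ⟩ := exists_fin_params.{u, v, w} φ
    have hG : ∀ x y, γ.Realize (Sum.elim (Sum.elim x y) g) ↔ x ∈ A ∧ F x = y := by
      intro x y
      have h1 := hφ (Sum.elim x y)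
      have h2 := hγ K (Sum.elim x y) id
      simp only [Set.mem_ofPred_eq, Sum.elim_comp_inl, Sum.elim_comp_inr] at h1
      rw [h1, h2]
      rfl
    have key := h k l p γ n j g
    simp only [AdditiveAt, hG] at key
    have hBeq : {y | ∃ x, x ∈ A ∧ F x = y} = B := by
      ext y
      constructor
      · rintro ⟨x, hx, rfl⟩
        exact hmap hx
      · exact fun hy => hsurj hy
    have hAeq : {x | ∃ y, x ∈ A ∧ F x = y} = A := by
      ext x
      simp
    rw [hBeq, hAeq] at key
    rw [key ?_ ?_ hj.symm, ← hj]
    · rfl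
    · rintro x y y' ⟨-, rfl⟩ ⟨-, rfl⟩ i
      rfl
    · rintro y ⟨x, hx, rfl⟩
      exact hn _ (hmap hx)

/-- If `M` carries a rank function satisfying Axioms 1.1 and 2 and `N` is an
elementary extension of `M`, then the canonical extension of `rk` to `N` satisfies Axiom 3
(additivity) if and only if `rk` itself does. -/
theorem canonExt_axiom3_iff (L : FirstOrder.Language.{u, v})
    (M : Type w) (N : Type w) [L.Structure M] [L.Structure N]
    (r : RankFunction L M) (h11 : r.Axiom1_1) (h2 : r.Axiom2 (Set.univ : Set M))
    (f : M ↪ₑ[L] N) (r' : RankFunction L N) (hr' : IsCanonExt r f r') :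
    r'.Axiom3 ↔ r.Axiom3 := by
  simp only [axiom3_iff_additiveAt]
  exact forall_congr' fun k => forall_congr' fun l => forall_congr' fun p => forall_congr' fun γ =>
    forall_congr' fun n => forall_congr' fun j => (Corr.additiveAt γ h11 h2 hr' n j).forall_iff.symm

end BP
end

section
/- Let T be a complete theory in a countable language having a model M that carries a BP_0'-rank relative to the empty set of parameters. Then T is atomic — every nonempty ∅-definable subset of a finite power of M contains a nonempty ∅-definable atom (a nonempty ∅-definable set all of whose nonempty ∅-definable subsets equal it) — and consequently T has a prime model. -/
/-!
Over the empty parameter set, degree approximation applied to one-member families says that every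
∅-definable set has finite degree. Among the nonempty ∅-definable subsets of a given `X`, one with
lexicographically least (rank, degree) is an atom: if it split into two nonempty ∅-definable
pieces, minimality forces both to have full rank, and then adjoining one piece to a
maximal full-rank partition of the other exceeds the degree (`exists_atom`).

Since atoms are dense, a tuple of `M` whose type is isolated can be prolonged by a witness of any
formula satisfiable over it so that the longer tuple still has isolated type
(`IsIsolatedTuple.exists_snoc`). With countably many formulas, bookkeeping yields a sequence in `M`
all of whose initial segments are isolated and whose range passes the Tarski-Vaught test
(`exists_isolated_sequence`). This range is an elementary substructure of `M`, hence a model of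
`T`; it embeds elementarily in every model `N` of `T`, because the sequence can be copied into `N`
one term at a time, each new term being a realization of an isolating formula
(`exists_copy_sequence`).
-/

open FirstOrder FirstOrder.Language Set Cardinal

universe u v w

namespace BP

variable {L : FirstOrder.Language.{u, v}} {M : Type w} [L.Structure M]

open RankFunction

/-! ### Atoms from minimal rank and degree -/

section Atoms

variable {L : FirstOrder.Language.{u, v}} {M : Type w} [L.Structure M]

/-- A set definable without parameters is the unique member of a family indexed by the
one-point set `Fin 0 → M`, so degree approximation applies to it directly. -/
theorem hasFiniteDegree_of_definable (r : RankFunction L M) (hd : r.DegreeApprox (∅ : Set M))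
    {n : ℕ} {Y : Set (Fin n → M)} (hY : Set.Definable (∅ : Set M) L Y) :
    r.HasFiniteDegree Y := by
  obtain ⟨φ, rfl⟩ := Set.empty_definable_iff.1 hY
  obtain ⟨a, -, ha⟩ := hd (n := n) (m := 0) Set.univ Set.definable_univ ⟨Fin.elim0, trivial⟩
    (φ.relabel Sum.inl)
  convert ha using 1
  ext x
  change φ.Realize x ↔ (φ.relabel Sum.inl).Realize (Sum.elim x a)
  rw [Formula.realize_relabel, Sum.elim_comp_inl]

theorem IsRankPartition.snoc (r : RankFunction L M) {n d : ℕ} {Y Z W : Set (Fin n → M)}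
    (hZ : r.IsRankPartition Z d) (hW : Set.Definable (Set.univ : Set M) L W) (hWne : W.Nonempty)
    (hrZ : r.rk Z = r.rk Y) (hrW : r.rk W = r.rk Y) (hdisj : Disjoint Z W) (hU : Z ∪ W = Y) :
    r.IsRankPartition Y (d + 1) := by
  obtain ⟨P, hPd, hPn, hPr, hPp, hPU⟩ := hZ
  have hPZ : ∀ i, P i ⊆ Z := fun i => hPU ▸ Set.subset_iUnion P i
  refine ⟨Fin.snoc (α := fun _ => Set (Fin n → M)) P W, ?_, ?_, ?_, ?_, ?_⟩
  · intro i
    refine Fin.lastCases ?_ (fun j => ?_) i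
    · simpa using hW
    · simpa using hPd j
  · intro i
    refine Fin.lastCases ?_ (fun j => ?_) i
    · simpa using hWne
    · simpa using hPn j
  · intro i
    refine Fin.lastCases ?_ (fun j => ?_) i
    · simpa using hrW
    · simpa using (hPr j).trans hrZ
  · intro i j
    refine Fin.lastCases ?_ (fun i => ?_) i <;> refine Fin.lastCases ?_ (fun j => ?_) j
    · intro h
      exact absurd rfl h
    · intro _
      simpa using (hdisj.mono_left (hPZ j)).symm
    · intro _
      simpa using hdisj.mono_left (hPZ i)
    · intro h
      have hij : i ≠ j := fun e => h (congrArg Fin.castSucc e)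
      simpa using hPp hij
  · rw [← hU, ← hPU]
    ext x
    simp only [Set.mem_iUnion, Set.mem_union, Fin.exists_fin_succ', Fin.snoc_castSucc,
      Fin.snoc_last]

/-- Density of atoms: a nonempty ∅-definable subset of lexicographically least (rank, degree) has
no proper nonempty ∅-definable subset. -/
theorem exists_atom (r : RankFunction L M) (h1 : r.Axiom1_1) (hd : r.DegreeApprox (∅ : Set M))
    {n : ℕ} (X : Set (Fin n → M)) (hX : Set.Definable (∅ : Set M) L X) (hne : X.Nonempty) :
    ∃ Y : Set (Fin n → M), Set.Definable (∅ : Set M) L Y ∧ Y.Nonempty ∧ Y ⊆ X ∧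
      ∀ Z : Set (Fin n → M), Set.Definable (∅ : Set M) L Z → Z.Nonempty → Z ⊆ Y → Z = Y := by
  let C : Set (WithBot ℕ ×ₗ ℕ) := {p | ∃ Y : Set (Fin n → M), Set.Definable (∅ : Set M) L Y ∧
    Y.Nonempty ∧ Y ⊆ X ∧ r.rk Y = (ofLex p).1 ∧ r.HasDegree Y (ofLex p).2}
  have hC : C.Nonempty := by
    obtain ⟨d, hdX⟩ := hasFiniteDegree_of_definable r hd hX
    exact ⟨toLex (r.rk X, d), X, hX, hne, subset_rfl, rfl, hdX⟩
  obtain ⟨p, ⟨Y, hY, hYne, hYX, hYr, hYd⟩, hmin⟩ := wellFounded_lt.has_min C hC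
  have key : ∀ Z : Set (Fin n → M), Set.Definable (∅ : Set M) L Z → Z.Nonempty → Z ⊆ Y →
      r.rk Z ≤ r.rk Y → r.rk Z = r.rk Y ∧ ∃ d, r.HasDegree Z d ∧ (ofLex p).2 ≤ d := by
    intro Z hZ hZne hZY hle
    obtain ⟨d, hdZ⟩ := hasFiniteDegree_of_definable r hd hZ
    have hnot := hmin (toLex (r.rk Z, d)) ⟨Z, hZ, hZne, hZY.trans hYX, rfl, hdZ⟩
    rw [Prod.Lex.lt_iff] at hnot
    simp only [ofLex_toLex, ← hYr, not_or, not_and, not_lt] at hnot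
    have he := le_antisymm hle hnot.1
    exact ⟨he, d, hdZ, hnot.2 he⟩
  refine ⟨Y, hY, hYne, hYX, fun Z hZ hZne hZY => ?_⟩
  by_contra hZneY
  have hWne : (Y \ Z).Nonempty := Set.sdiff_nonempty.2 fun hYZ => hZneY (hZY.antisymm hYZ)
  have hW : Set.Definable (∅ : Set M) L (Y \ Z) := hY.sdiff hZ
  have hU : Z ∪ Y \ Z = Y := Set.union_sdiff_cancel hZY
  have hmax := h1 Z (Y \ Z) (hZ.mono (Set.empty_subset _)) (hW.mono (Set.empty_subset _))
  rw [hU] at hmax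
  obtain ⟨hrZ, d, hdZ, hle⟩ := key Z hZ hZne hZY (hmax ▸ le_max_left _ _)
  obtain ⟨hrW, -⟩ := key (Y \ Z) hW hWne Set.sdiff_subset (hmax ▸ le_max_right _ _)
  have hP : r.IsRankPartition Y (d + 1) :=
    IsRankPartition.snoc r hdZ.1 (hW.mono (Set.empty_subset _)) hWne hrZ hrW
      Set.disjoint_sdiff_right hU
  have := hYd.2 _ hP
  omega

end Atoms

/-! ### Sequences built one term at a time -/

/-- Dependent choice along finite tuples: if every tuple satisfying `P` can be prolonged by a term
satisfying `Q` so that `P` persists, then there is an infinite sequence doing so at every stage. -/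
theorem exists_sequence {α : Type*} (P : ∀ n : ℕ, (Fin n → α) → Prop)
    (Q : ∀ n : ℕ, (Fin n → α) → α → Prop) (h0 : P 0 Fin.elim0)
    (hs : ∀ n t, P n t → ∃ b : α, P (n + 1) (Fin.snoc (α := fun _ => α) t b) ∧ Q n t b) :
    ∃ a : ℕ → α, ∀ n, P n (fun i => a i) ∧ Q n (fun i => a i) (a n) := by
  have : Nonempty α := ⟨(hs 0 _ h0).choose⟩
  choose! g hg using hs
  let s : ∀ n : ℕ, Fin n → α := fun n =>
    Nat.rec Fin.elim0 (fun n t => Fin.snoc (α := fun _ => α) t (g n t)) n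
  have hP : ∀ n, P n (s n) := by
    intro n
    induction n with
    | zero => exact h0
    | succ n ih => exact (hg n _ ih).1
  let a : ℕ → α := fun n => g n (s n)
  have hsa : ∀ n, s n = fun i : Fin n => a i := by
    intro n
    induction n with
    | zero => exact funext fun i => i.elim0
    | succ n ih =>
      funext i
      change Fin.snoc (α := fun _ => α) (s n) (g n (s n)) i = a i
      refine Fin.lastCases ?_ (fun j => ?_) i
      · simp [a]
      · rw [Fin.snoc_castSucc, ih]
        rfl
  refine ⟨a, fun n => ?_⟩
  rw [← hsa n]
  exact ⟨hP n, (hg n _ (hP n)).2⟩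

/-! ### Isolated tuples -/

section Isolated

variable {L : FirstOrder.Language.{u, v}} {M : Type w} [L.Structure M]

/-- The formula `∃ y, φ(x, y)`, quantifying out the last variable. -/
noncomputable def exLast {n : ℕ} (φ : L.Formula (Fin (n + 1))) : L.Formula (Fin n) :=
  (φ.relabel (Fin.lastCases (Sum.inr ()) Sum.inl : Fin (n + 1) → Fin n ⊕ Unit)).iExs Unit

theorem realize_exLast {n : ℕ} (φ : L.Formula (Fin (n + 1))) (t : Fin n → M) :
    (exLast φ).Realize t ↔ ∃ b : M, φ.Realize (Fin.snoc (α := fun _ => M) t b) := by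
  have h : ∀ i : Unit → M, Sum.elim t i ∘
      (Fin.lastCases (Sum.inr ()) Sum.inl : Fin (n + 1) → Fin n ⊕ Unit) =
      Fin.snoc (α := fun _ => M) t (i ()) := by
    intro i
    funext j
    refine Fin.lastCases ?_ (fun j => ?_) j <;> simp
  simp only [exLast, Formula.realize_iExs, Formula.realize_relabel, h]
  exact ⟨fun ⟨i, hi⟩ => ⟨i (), hi⟩, fun ⟨b, hb⟩ => ⟨fun _ => b, hb⟩⟩

/-- The complete type of `t` over `∅` is isolated: some formula true of `t` implies, in `M`, every
formula true of `t`. -/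
def IsIsolatedTuple (L : FirstOrder.Language.{u, v}) {M : Type w} [L.Structure M] {n : ℕ}
    (t : Fin n → M) : Prop :=
  ∃ χ : L.Formula (Fin n), χ.Realize t ∧
    ∀ θ : L.Formula (Fin n), θ.Realize t → ∀ x : Fin n → M, χ.Realize x → θ.Realize x

/-- Density of atoms, phrased with formulas: every formula satisfiable in `M` is implied by a
satisfiable formula `χ` all of whose realizations in `M` have the same type. -/
def AtomsDense (L : FirstOrder.Language.{u, v}) (M : Type w) [L.Structure M] : Prop :=
  ∀ (n : ℕ) (ψ : L.Formula (Fin n)), (∃ x : Fin n → M, ψ.Realize x) →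
    ∃ χ : L.Formula (Fin n), (∃ x : Fin n → M, χ.Realize x) ∧
      (∀ x : Fin n → M, χ.Realize x → ψ.Realize x) ∧
      ∀ (θ : L.Formula (Fin n)) (x y : Fin n → M), χ.Realize x → θ.Realize x → χ.Realize y →
        θ.Realize y

theorem atomsDense_of_exists_atom
    (h : ∀ (n : ℕ) (X : Set (Fin n → M)), Set.Definable (∅ : Set M) L X → X.Nonempty →
      ∃ Y : Set (Fin n → M), Set.Definable (∅ : Set M) L Y ∧ Y.Nonempty ∧ Y ⊆ X ∧
        ∀ Z : Set (Fin n → M), Set.Definable (∅ : Set M) L Z → Z.Nonempty → Z ⊆ Y → Z = Y) :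
    AtomsDense L M := by
  intro n ψ ⟨x, hx⟩
  obtain ⟨Y, hY, hYne, hYX, hatom⟩ := h n {x | ψ.Realize x}
    (Set.empty_definable_iff.2 ⟨ψ, rfl⟩) ⟨x, hx⟩
  obtain ⟨χ, rfl⟩ := Set.empty_definable_iff.1 hY
  refine ⟨χ, hYne, fun x hx => hYX hx, fun θ x y hχx hθx hχy => ?_⟩
  have hZ := hatom {x | (χ ⊓ θ).Realize x} (Set.empty_definable_iff.2 ⟨χ ⊓ θ, rfl⟩)
    ⟨x, Formula.realize_inf.2 ⟨hχx, hθx⟩⟩ (fun z hz => (Formula.realize_inf.1 hz).1)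
  have hy : y ∈ {x | (χ ⊓ θ).Realize x} := hZ ▸ hχy
  exact (Formula.realize_inf.1 hy).2

/-- If `χ(x)` isolates `t`, an atom `ρ(x, y)` below `χ(x) ∧ ψ(x, y)` must satisfy `∃ y, ρ(t, y)`,
since otherwise `χ` would imply `¬ ∃ y, ρ(x, y)`. -/
theorem IsIsolatedTuple.exists_snoc (hA : AtomsDense L M) {n : ℕ} {t : Fin n → M}
    (ht : IsIsolatedTuple L t) (ψ : L.Formula (Fin (n + 1))) (c : M)
    (hc : ψ.Realize (Fin.snoc (α := fun _ => M) t c)) :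
    ∃ b : M, IsIsolatedTuple L (Fin.snoc (α := fun _ => M) t b) ∧
      ψ.Realize (Fin.snoc (α := fun _ => M) t b) := by
  obtain ⟨χ, hχt, hχ⟩ := ht
  have hcs : ∀ b : M, Fin.snoc (α := fun _ => M) t b ∘ Fin.castSucc = t := fun b => by
    funext i; simp
  obtain ⟨ρ, ⟨x, hx⟩, hρψ, hρ⟩ := hA (n + 1) (χ.relabel Fin.castSucc ⊓ ψ)
    ⟨Fin.snoc (α := fun _ => M) t c, Formula.realize_inf.2
      ⟨by rw [Formula.realize_relabel, hcs]; exact hχt, hc⟩⟩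
  have hex : ∃ b : M, ρ.Realize (Fin.snoc (α := fun _ => M) t b) := by
    rw [← realize_exLast]
    by_contra hno
    have hχx : χ.Realize (x ∘ Fin.castSucc) :=
      Formula.realize_relabel.1 (Formula.realize_inf.1 (hρψ x hx)).1
    have := hχ (exLast ρ).not (Formula.realize_not.2 hno) _ hχx
    rw [Formula.realize_not, realize_exLast] at this
    refine this ⟨x (Fin.last n), ?_⟩
    have hxx : Fin.snoc (α := fun _ => M) (x ∘ Fin.castSucc) (x (Fin.last n)) = x :=
      Fin.snoc_init_self x
    rwa [hxx]
  obtain ⟨b, hb⟩ := hex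
  exact ⟨b, ⟨ρ, hb, fun θ hθ y hy => hρ θ _ y hb hθ hy⟩, (Formula.realize_inf.1 (hρψ _ hb)).2⟩

theorem isIsolatedTuple_zero (hA : AtomsDense L M) :
    IsIsolatedTuple L (Fin.elim0 : Fin 0 → M) := by
  obtain ⟨χ, ⟨x, hx⟩, -, hχ⟩ := hA 0 ⊤ ⟨Fin.elim0, Formula.realize_top.2 trivial⟩
  rw [Subsingleton.elim x Fin.elim0] at hx
  exact ⟨χ, hx, fun θ hθ y hy => hχ θ _ y hx hθ hy⟩

/-! ### An atomic elementary substructure -/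

/-- A sequence in `M` with isolated initial segments whose range passes the Tarski-Vaught test.
A requirement is a formula `φ(x, y)` together with indices `σ` of the terms to be substituted for
`x`; each requirement is taken up at infinitely many stages, so at one past all of its indices. -/
theorem exists_isolated_sequence [Countable L.Symbols] [Nonempty M] (hA : AtomsDense L M) :
    ∃ a : ℕ → M, (∀ n, IsIsolatedTuple L (fun i : Fin n => a i)) ∧
      ∀ (k : ℕ) (φ : L.Formula (Fin (k + 1))) (σ : Fin k → ℕ) (c : M),
        φ.Realize (Fin.snoc (α := fun _ => M) (a ∘ σ) c) →
          ∃ j, φ.Realize (Fin.snoc (α := fun _ => M) (a ∘ σ) (a j)) := by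
  let R := Σ k : ℕ, (Fin k → ℕ) × L.Formula (Fin (k + 1))
  have : Nonempty R := ⟨⟨0, Fin.elim0, ⊤⟩⟩
  obtain ⟨e, he⟩ := exists_surjective_nat R
  let q : ℕ → R := fun n => e n.unpair.1
  obtain ⟨a, ha⟩ := exists_sequence (α := M) (fun n t => IsIsolatedTuple L t)
    (fun n t b => ∀ hσ : ∀ i, (q n).2.1 i < n, ∀ c : M,
      (q n).2.2.Realize (Fin.snoc (α := fun _ => M) (fun i => t ⟨(q n).2.1 i, hσ i⟩) c) →
      (q n).2.2.Realize (Fin.snoc (α := fun _ => M) (fun i => t ⟨(q n).2.1 i, hσ i⟩) b))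
    (isIsolatedTuple_zero hA) (by
      intro n t ht
      by_cases hyp : ∃ hσ : ∀ i, (q n).2.1 i < n, ∃ c : M,
        (q n).2.2.Realize (Fin.snoc (α := fun _ => M) (fun i => t ⟨(q n).2.1 i, hσ i⟩) c)
      · obtain ⟨hσ, c, hc⟩ := hyp
        let g : Fin ((q n).1 + 1) → Fin (n + 1) :=
          Fin.snoc (α := fun _ => Fin (n + 1))
            (fun i => Fin.castSucc ⟨(q n).2.1 i, hσ i⟩) (Fin.last n)
        have hg : ∀ b : M, Fin.snoc (α := fun _ => M) t b ∘ g =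
            Fin.snoc (α := fun _ => M) (fun i => t ⟨(q n).2.1 i, hσ i⟩) b := by
          intro b
          funext j
          refine Fin.lastCases ?_ (fun j => ?_) j
          · simp [g]
          · simp only [g, Function.comp_apply, Fin.snoc_castSucc]
        obtain ⟨b, hb, hψ⟩ := ht.exists_snoc hA ((q n).2.2.relabel g) c
          (by rw [Formula.realize_relabel, hg]; exact hc)
        rw [Formula.realize_relabel, hg] at hψ
        exact ⟨b, hb, fun _ _ _ => hψ⟩
      · obtain ⟨b, hb, -⟩ := ht.exists_snoc hA ⊤ (Classical.arbitrary M)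
          (Formula.realize_top.2 trivial)
        exact ⟨b, hb, fun hσ c hc => absurd ⟨hσ, c, hc⟩ hyp⟩)
  refine ⟨a, fun n => (ha n).1, fun k φ σ c hc => ?_⟩
  obtain ⟨i, hi⟩ := he ⟨k, σ, φ⟩
  obtain ⟨m, hm⟩ : ∃ m, ∀ i, σ i < m :=
    ⟨Finset.univ.sup σ + 1, fun i => Nat.lt_succ_of_le (Finset.le_sup (Finset.mem_univ i))⟩
  have hq : q (Nat.pair i m) = ⟨k, σ, φ⟩ := by simp [q, hi]
  have hQ := (ha (Nat.pair i m)).2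
  rw [hq] at hQ
  exact ⟨_, hQ (fun j => (hm j).trans_le (Nat.right_le_pair i m)) c hc⟩

/-- The elementary substructure carried by a sequence passing the Tarski-Vaught test. Closure
under a function symbol `f` is the test for the formula `f(x) = y`. -/
theorem exists_elementarySubstructure (a : ℕ → M)
    (ha : ∀ (k : ℕ) (φ : L.Formula (Fin (k + 1))) (σ : Fin k → ℕ) (c : M),
        φ.Realize (Fin.snoc (α := fun _ => M) (a ∘ σ) c) →
          ∃ j, φ.Realize (Fin.snoc (α := fun _ => M) (a ∘ σ) (a j))) :
    ∃ S : L.ElementarySubstructure M, (S : Set M) = Set.range a := by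
  let S : L.Substructure M :=
    { carrier := Set.range a
      fun_mem := by
        intro k f x hx
        choose σ hσ using hx
        obtain rfl : a ∘ σ = x := funext hσ
        obtain ⟨j, hj⟩ := ha k
          (Term.equal (Term.func f fun i => Term.var i.castSucc) (Term.var (Fin.last k))) σ
          (Structure.funMap f (a ∘ σ)) (by simp [Formula.realize_equal, Function.comp_def])
        refine ⟨j, ?_⟩
        simpa [Formula.realize_equal, Function.comp_def, eq_comm] using hj }
  refine ⟨S.toElementarySubstructure ?_, rfl⟩
  intro k φ x c hc
  choose σ hσ using fun i => (x i).2
  have hx : ((↑) ∘ x : Fin k → M) = a ∘ σ := funext fun i => (hσ i).symm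
  have hφ : ∀ y : Fin (k + 1) → M,
      (φ.toFormula.relabel (Sum.elim Empty.elim id)).Realize y ↔ φ.Realize default y := by
    intro y
    rw [Formula.realize_relabel, BoundedFormula.realize_toFormula]
    exact iff_of_eq (congrArg₂ _ (Subsingleton.elim _ _) rfl)
  rw [hx] at hc ⊢
  obtain ⟨j, hj⟩ := ha k _ σ c ((hφ _).2 hc)
  exact ⟨⟨a j, j, rfl⟩, (hφ _).1 hj⟩

/-! ### Copying the sequence into another model -/

/-- In an elementarily equivalent structure, a sequence with isolated initial segments has a copy
with the same type. If `χ(x, y)` isolates a segment of length `n + 1`, the formulas `∃ y, χ(x, y)`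
and `¬ ∃ y, χ(x, y) ∧ ¬ θ(x, y)` transfer to the partial copy of length `n`. -/
theorem exists_copy_sequence {N : Type*} [L.Structure N]
    (h0 : ∀ φ : L.Sentence, M ⊨ φ ↔ N ⊨ φ) (a : ℕ → M)
    (ha : ∀ n, IsIsolatedTuple L (fun i : Fin n => a i)) :
    ∃ b : ℕ → N, ∀ (n : ℕ) (θ : L.Formula (Fin n)),
      θ.Realize (fun i : Fin n => a i) ↔ θ.Realize (fun i : Fin n => b i) := by
  have hsnoc : ∀ n, (fun i : Fin (n + 1) => a i) =
      Fin.snoc (α := fun _ => M) (fun i : Fin n => a i) (a n) := by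
    intro n
    funext i
    refine Fin.lastCases ?_ (fun j => ?_) i <;> simp
  obtain ⟨b, hb⟩ := exists_sequence (α := N)
    (fun n t => ∀ θ : L.Formula (Fin n), θ.Realize (fun i : Fin n => a i) ↔ θ.Realize t)
    (fun _ _ _ => True)
    (by
      intro θ
      have key := h0 (θ.relabel (Fin.elim0 : Fin 0 → Empty))
      rw [Sentence.Realize, Sentence.Realize, Formula.realize_relabel,
        Formula.realize_relabel] at key
      convert key using 2)
    (by
      intro n t ht
      obtain ⟨χ, hχa, hχ⟩ := ha (n + 1)
      obtain ⟨b, hb⟩ := (realize_exLast χ t).1 ((ht _).1 ((realize_exLast χ _).2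
        ⟨a n, by rw [← hsnoc]; exact hχa⟩))
      have hone : ∀ θ : L.Formula (Fin (n + 1)), θ.Realize (fun i : Fin (n + 1) => a i) →
          θ.Realize (Fin.snoc (α := fun _ => N) t b) := by
        intro θ hθ
        have hM : ¬ (exLast (χ ⊓ θ.not)).Realize (fun i : Fin n => a i) := by
          rw [realize_exLast]
          rintro ⟨y, hy⟩
          rw [Formula.realize_inf, Formula.realize_not] at hy
          exact hy.2 (hχ θ hθ _ hy.1)
        rw [ht, realize_exLast] at hM
        by_contra hno
        exact hM ⟨b, Formula.realize_inf.2 ⟨hb, Formula.realize_not.2 hno⟩⟩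
      refine ⟨b, fun θ => ⟨hone θ, fun hθ => ?_⟩, trivial⟩
      by_contra hno
      exact Formula.realize_not.1 (hone θ.not (Formula.realize_not.2 hno)) hθ)
  exact ⟨b, fun n => (hb n).1⟩

theorem exists_elementaryEmbedding {N : Type*} [L.Structure N] (a : ℕ → M) (b : ℕ → N)
    (hab : ∀ (n : ℕ) (θ : L.Formula (Fin n)),
      θ.Realize (fun i : Fin n => a i) ↔ θ.Realize (fun i : Fin n => b i))
    (S : L.ElementarySubstructure M) (hS : (S : Set M) = Set.range a) :
    Nonempty (S ↪ₑ[L] N) := by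
  have hmem : ∀ s : S, ∃ i, a i = s := fun s => by
    have : (s : M) ∈ (S : Set M) := s.2
    rwa [hS] at this
  choose idx hidx using hmem
  refine ⟨⟨fun s => b (idx s), fun k φ x => ?_⟩⟩
  obtain ⟨m, hm⟩ : ∃ m, ∀ i, idx (x i) < m :=
    ⟨Finset.univ.sup (fun i => idx (x i)) + 1, fun i =>
      Nat.lt_succ_of_le (Finset.le_sup (f := fun i => idx (x i)) (Finset.mem_univ i))⟩
  have key := hab m (φ.relabel fun i => ⟨idx (x i), hm i⟩)
  rw [Formula.realize_relabel, Formula.realize_relabel] at key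
  have hx : (fun i : Fin m => a i) ∘ (fun i => ⟨idx (x i), hm i⟩) = S.subtype ∘ x :=
    funext fun i => hidx (x i)
  rw [hx, S.subtype.map_formula] at key
  exact key.symm

end Isolated

/-- If a complete theory `T` in a countable language has a model `M` carrying a
BP₀'-rank relative to `∅`, then `T` is atomic — every nonempty ∅-definable subset of a finite
power of `M` contains a nonempty ∅-definable atom — and consequently `T` has a prime model. -/
theorem atomic_and_primeModel (L : FirstOrder.Language.{0, 0}) [Countable L.Symbols]
    (T : L.Theory) (hT : T.IsComplete) (M : Theory.ModelType.{0, 0, 0} T)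
    (r : RankFunction L M) (h : r.IsBP0'Rank (∅ : Set M)) :
    (∀ (n : ℕ) (X : Set (Fin n → M)), Set.Definable (∅ : Set M) L X → X.Nonempty →
      ∃ Y : Set (Fin n → M), Set.Definable (∅ : Set M) L Y ∧ Y.Nonempty ∧ Y ⊆ X ∧
        ∀ Z : Set (Fin n → M), Set.Definable (∅ : Set M) L Z → Z.Nonempty → Z ⊆ Y → Z = Y) ∧
    ∃ M₀ : Theory.ModelType.{0, 0, 0} T, ∀ N : Theory.ModelType.{0, 0, 0} T,
      Nonempty (↥M₀ ↪ₑ[L] ↥N) := by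
  obtain ⟨h1, hd, -, -⟩ := h
  have hatom := fun n (X : Set (Fin n → M)) => exists_atom r h1 hd X
  refine ⟨hatom, ?_⟩
  obtain ⟨a, ha, htv⟩ := exists_isolated_sequence (atomsDense_of_exists_atom hatom)
  obtain ⟨S, hS⟩ := exists_elementarySubstructure a htv
  refine ⟨Theory.ModelType.of T S, fun N => ?_⟩
  obtain ⟨b, hb⟩ := exists_copy_sequence (N := N) (fun φ =>
    (hT.realize_sentence_iff φ M).trans (hT.realize_sentence_iff φ N).symm) a ha
  exact exists_elementaryEmbedding a b hb S hS

end BP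
end
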